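/- Let K_f be the interval polynomial family of degree n with bounds a̲_i ≤ a̅_i (i = 0,…,n), with Kharitonov vertices f_{ij} (i,j ∈ {1,2}). Then for every fixed ω ≥ 0, the value set { f(iω) : f ∈ K_f } ⊆ ℂ equals the axis-parallel rectangle { z ∈ ℂ : α^{(1)}(−ω²) ≤ Re z ≤ α^{(2)}(−ω²), ω β^{(1)}(−ω²) ≤ Im z ≤ ω β^{(2)}(−ω²) }, whose four corners are f_{11}(iω), f_{12}(iω), f_{21}(iω), f_{22}(iω). -/

import Mathlib

/-!
At `s = iω` the even powers of `s` are the reals `(-ω²)^m` and the odd powers are `iω(-ω²)^m`, so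
the real part of `f(iω)` depends only on the even coefficients of `f` and the imaginary part only
on the odd ones (`sum_mul_I_pow`). As `(-ω²)^m` has the sign of `(-1)^m`, the alternating choice of
bounds in `khCoeff` minimises (index `1`) or maximises (index `2`) each term separately; this gives
the inclusion of the value set in the rectangle. Conversely, the coordinates of a point of the
rectangle are convex combinations of the extreme values. Mixing the even coefficients with one
weight and the odd coefficients with another, independently, yields a member of the family
attaining that point.
-/

open Polynomial Complex Set

noncomputable section

/-- The `k`-th coefficient of the Kharitonov vertex polynomial with indices
`i, j ∈ {1, 2}`, built from lower bounds `l` and upper bounds `u`: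
even coefficients follow the pattern of `α⁽ⁱ⁾`, odd ones follow `β⁽ʲ⁾`. -/
def khCoeff (l u : ℕ → ℝ) (i j : ℕ) (k : ℕ) : ℝ :=
  if k % 2 = 0 then
    if (k / 2) % 2 = 0 then (if i = 1 then l k else u k)
    else (if i = 1 then u k else l k)
  else
    if (k / 2) % 2 = 0 then (if j = 1 then l k else u k)
    else (if j = 1 then u k else l k)

/-- The Kharitonov vertex polynomial `f_{ij}(s) = α⁽ⁱ⁾(s²) + s β⁽ʲ⁾(s²)`. -/
def khVertex (n : ℕ) (l u : ℕ → ℝ) (i j : ℕ) : Polynomial ℝ :=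
  ∑ k ∈ Finset.range (n + 1), Polynomial.C (khCoeff l u i j k) * Polynomial.X ^ k

/-- The interval polynomial family with coefficient bounds `l k ≤ c k ≤ u k`
for `k = 0, …, n`. -/
def intervalFamily (n : ℕ) (l u : ℕ → ℝ) : Set (Polynomial ℝ) :=
  { f | f.natDegree ≤ n ∧ ∀ k ≤ n, f.coeff k ∈ Set.Icc (l k) (u k) }

/-- `α⁽ⁱ⁾(-ω²)`: the even part of the Kharitonov vertex with index `i`,
evaluated at `s² = -ω²`. -/
def khAlpha (n : ℕ) (l u : ℕ → ℝ) (i : ℕ) (ω : ℝ) : ℝ :=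
  ∑ m ∈ Finset.range (n / 2 + 1), khCoeff l u i 1 (2 * m) * (-(ω ^ 2)) ^ m

/-- `β⁽ʲ⁾(-ω²)`: the odd part of the Kharitonov vertex with index `j`,
evaluated at `s² = -ω²`. -/
def khBeta (n : ℕ) (l u : ℕ → ℝ) (j : ℕ) (ω : ℝ) : ℝ :=
  ∑ m ∈ Finset.range ((n + 1) / 2), khCoeff l u 1 j (2 * m + 1) * (-(ω ^ 2)) ^ m

/-- Separation of a polynomial value on the imaginary axis into the contributions of even and odd
coefficients. -/
lemma sum_mul_I_pow (c : ℕ → ℝ) (ω : ℝ) (n : ℕ) :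
    ∑ k ∈ Finset.range (n + 1), (c k : ℂ) * ((ω : ℂ) * Complex.I) ^ k =
      ((∑ m ∈ Finset.range (n / 2 + 1), c (2 * m) * (-(ω ^ 2)) ^ m : ℝ) : ℂ) +
      ((ω * ∑ m ∈ Finset.range ((n + 1) / 2), c (2 * m + 1) * (-(ω ^ 2)) ^ m : ℝ) : ℂ) *
        Complex.I := by
  have hsq : ((ω : ℂ) * Complex.I) ^ 2 = ((-(ω ^ 2) : ℝ) : ℂ) := by
    rw [mul_pow, Complex.I_sq]; push_cast; ring
  induction n with
  | zero => simp
  | succ n ih =>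
    rw [Finset.sum_range_succ, ih]
    rcases Nat.even_or_odd' n with ⟨p, rfl | rfl⟩
    · have h1 : (2 * p + 1) / 2 = p := by omega
      have h2 : (2 * p + 1 + 1) / 2 = p + 1 := by omega
      have h3 : 2 * p / 2 = p := by omega
      rw [h1, h2, h3, Finset.sum_range_succ (fun m => c (2 * m + 1) * (-(ω ^ 2)) ^ m) p,
        pow_succ ((ω : ℂ) * Complex.I), pow_mul, hsq]
      push_cast
      ring
    · have h1 : (2 * p + 1) / 2 = p := by omega
      have h2 : (2 * p + 1 + 1) / 2 = p + 1 := by omega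
      have h3 : (2 * p + 1 + 1 + 1) / 2 = p + 1 := by omega
      rw [h1, h2, h3, Finset.sum_range_succ (fun m => c (2 * m) * (-(ω ^ 2)) ^ m) (p + 1),
        show 2 * p + 1 + 1 = 2 * (p + 1) by ring, pow_mul, hsq]
      push_cast
      ring

lemma aeval_sum_C_mul_X_pow (c : ℕ → ℝ) (z : ℂ) (n : ℕ) :
    Polynomial.aeval z (∑ k ∈ Finset.range (n + 1), Polynomial.C (c k) * Polynomial.X ^ k) =
      ∑ k ∈ Finset.range (n + 1), (c k : ℂ) * z ^ k := by
  simp [map_sum]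

lemma khCoeff_even (l u : ℕ → ℝ) (i j m : ℕ) :
    khCoeff l u i j (2 * m) = khCoeff l u i 1 (2 * m) := by
  simp [khCoeff]

lemma khCoeff_odd (l u : ℕ → ℝ) (i j m : ℕ) :
    khCoeff l u i j (2 * m + 1) = khCoeff l u 1 j (2 * m + 1) := by
  simp [khCoeff]

lemma khCoeff_mem_Icc (l u : ℕ → ℝ) (i j k : ℕ) (h : l k ≤ u k) :
    khCoeff l u i j k ∈ Set.Icc (l k) (u k) := by
  unfold khCoeff
  split_ifs <;> simp [h]

/-- Whether `khCoeff` picks the lower or the upper bound at `2 * m` matches the sign of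
`(-ω²)^m`, so the extreme terms are the Kharitonov ones. -/
lemma even_term_mem_Icc (l u : ℕ → ℝ) (ω a : ℝ) (m : ℕ)
    (h : a ∈ Set.Icc (l (2 * m)) (u (2 * m))) :
    a * (-(ω ^ 2)) ^ m ∈ Set.Icc (khCoeff l u 1 1 (2 * m) * (-(ω ^ 2)) ^ m)
      (khCoeff l u 2 1 (2 * m) * (-(ω ^ 2)) ^ m) := by
  obtain ⟨h1, h2⟩ := h
  have h0 : 2 * m / 2 = m := by omega
  rcases Nat.even_or_odd m with hm | hm
  · have hp : 0 ≤ (-(ω ^ 2)) ^ m := hm.pow_nonneg _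
    have hm' := Nat.even_iff.mp hm
    simp only [khCoeff, h0, hm', Nat.mul_mod_right]
    constructor <;> simp <;> gcongr
  · have hp : (-(ω ^ 2)) ^ m ≤ 0 := hm.pow_nonpos (by nlinarith [sq_nonneg ω])
    have hm' := Nat.odd_iff.mp hm
    simp only [khCoeff, h0, hm', Nat.mul_mod_right]
    constructor <;> simp
    · exact mul_le_mul_of_nonpos_right h2 hp
    · exact mul_le_mul_of_nonpos_right h1 hp

/-- The odd counterpart of `even_term_mem_Icc`. -/
lemma odd_term_mem_Icc (l u : ℕ → ℝ) (ω a : ℝ) (m : ℕ)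
    (h : a ∈ Set.Icc (l (2 * m + 1)) (u (2 * m + 1))) :
    a * (-(ω ^ 2)) ^ m ∈ Set.Icc (khCoeff l u 1 1 (2 * m + 1) * (-(ω ^ 2)) ^ m)
      (khCoeff l u 1 2 (2 * m + 1) * (-(ω ^ 2)) ^ m) := by
  -- An odd index follows the same pattern as the even index just below it.
  have key := even_term_mem_Icc (fun k => l (k + 1)) (fun k => u (k + 1)) ω a m h
  have h0 : (2 * m + 1) / 2 = m := by omega
  have h1 : (2 * m + 1) % 2 ≠ 0 := by omega
  simpa [khCoeff, h0, h1] using key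

lemma even_sum_mem_Icc (n : ℕ) (l u c : ℕ → ℝ) (ω : ℝ)
    (h : ∀ k ≤ n, c k ∈ Set.Icc (l k) (u k)) :
    ∑ m ∈ Finset.range (n / 2 + 1), c (2 * m) * (-(ω ^ 2)) ^ m ∈
      Set.Icc (khAlpha n l u 1 ω) (khAlpha n l u 2 ω) := by
  have H : ∀ m ∈ Finset.range (n / 2 + 1), _ := fun m hm =>
    even_term_mem_Icc l u ω (c (2 * m)) m (h _ (by have := Finset.mem_range.mp hm; omega))
  exact ⟨Finset.sum_le_sum fun m hm => (H m hm).1, Finset.sum_le_sum fun m hm => (H m hm).2⟩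

lemma odd_sum_mem_Icc (n : ℕ) (l u c : ℕ → ℝ) (ω : ℝ)
    (h : ∀ k ≤ n, c k ∈ Set.Icc (l k) (u k)) :
    ∑ m ∈ Finset.range ((n + 1) / 2), c (2 * m + 1) * (-(ω ^ 2)) ^ m ∈
      Set.Icc (khBeta n l u 1 ω) (khBeta n l u 2 ω) := by
  have H : ∀ m ∈ Finset.range ((n + 1) / 2), _ := fun m hm =>
    odd_term_mem_Icc l u ω (c (2 * m + 1)) m (h _ (by have := Finset.mem_range.mp hm; omega))
  exact ⟨Finset.sum_le_sum fun m hm => (H m hm).1, Finset.sum_le_sum fun m hm => (H m hm).2⟩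

/-- For each `ω ≥ 0`, the value set `{ f(iω) : f ∈ K_f }` of an interval
polynomial family is the axis-parallel rectangle
`[α⁽¹⁾(-ω²), α⁽²⁾(-ω²)] × [ω β⁽¹⁾(-ω²), ω β⁽²⁾(-ω²)]`, whose four corners are
the values `f_{ij}(iω)` of the Kharitonov vertex polynomials. -/
theorem value_set_is_kharitonov_rectangle
    (n : ℕ) (l u : ℕ → ℝ) (hlu : ∀ k ≤ n, l k ≤ u k)
    (ω : ℝ) (hω : 0 ≤ ω) :
    (fun f : Polynomial ℝ => Polynomial.aeval ((ω : ℂ) * Complex.I) f) ''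
        intervalFamily n l u =
      { z : ℂ | khAlpha n l u 1 ω ≤ z.re ∧ z.re ≤ khAlpha n l u 2 ω ∧
          ω * khBeta n l u 1 ω ≤ z.im ∧ z.im ≤ ω * khBeta n l u 2 ω } ∧
    (∀ i ∈ ({1, 2} : Set ℕ), ∀ j ∈ ({1, 2} : Set ℕ),
      Polynomial.aeval ((ω : ℂ) * Complex.I) (khVertex n l u i j) =
        (khAlpha n l u i ω : ℂ) + (ω * khBeta n l u j ω : ℝ) * Complex.I) := by
  refine ⟨Set.Subset.antisymm ?_ ?_, ?_⟩
  · rintro _ ⟨f, ⟨hdeg, hf⟩, rfl⟩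
    have hval : Polynomial.aeval ((ω : ℂ) * Complex.I) f = _ :=
      (by
        rw [Polynomial.aeval_eq_sum_range' (Nat.lt_succ_of_le hdeg)]
        simp only [Complex.real_smul] :
          Polynomial.aeval ((ω : ℂ) * Complex.I) f =
            ∑ k ∈ Finset.range (n + 1), (f.coeff k : ℂ) * ((ω : ℂ) * Complex.I) ^ k).trans
        (sum_mul_I_pow f.coeff ω n)
    have hA := even_sum_mem_Icc n l u f.coeff ω hf
    have hB := odd_sum_mem_Icc n l u f.coeff ω hf
    simp only [hval, Set.mem_ofPred_eq, Complex.add_re, Complex.add_im, Complex.re_ofReal_mul,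
      Complex.im_ofReal_mul, Complex.ofReal_re, Complex.ofReal_im, Complex.I_re, Complex.I_im,
      mul_zero, add_zero, mul_one, zero_add]
    exact ⟨hA.1, hA.2, mul_le_mul_of_nonneg_left hB.1 hω, mul_le_mul_of_nonneg_left hB.2 hω⟩
  · rintro z ⟨h1, h2, h3, h4⟩
    have hx : z.re ∈ segment ℝ (khAlpha n l u 1 ω) (khAlpha n l u 2 ω) := by
      rw [segment_eq_Icc (h1.trans h2)]; exact ⟨h1, h2⟩
    have hy : z.im ∈ segment ℝ (ω * khBeta n l u 1 ω) (ω * khBeta n l u 2 ω) := by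
      rw [segment_eq_Icc (h3.trans h4)]; exact ⟨h3, h4⟩
    obtain ⟨a, b, ha, hb, hab, hx⟩ := hx
    obtain ⟨p, q, hp, hq, hpq, hy⟩ := hy
    let c : ℕ → ℝ := fun k =>
      if k % 2 = 0 then a * khCoeff l u 1 1 k + b * khCoeff l u 2 1 k
      else p * khCoeff l u 1 1 k + q * khCoeff l u 1 2 k
    have hc : ∀ k ≤ n, c k ∈ Set.Icc (l k) (u k) := by
      intro k hk
      have hm := fun i j => khCoeff_mem_Icc l u i j k (hlu k hk)
      simp only [c]
      split_ifs
      · exact convex_Icc _ _ (hm _ _) (hm _ _) ha hb hab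
      · exact convex_Icc _ _ (hm _ _) (hm _ _) hp hq hpq
    have hA : ∑ m ∈ Finset.range (n / 2 + 1), c (2 * m) * (-(ω ^ 2)) ^ m = z.re := by
      rw [← hx, smul_eq_mul, smul_eq_mul, khAlpha, khAlpha, Finset.mul_sum, Finset.mul_sum,
        ← Finset.sum_add_distrib]
      refine Finset.sum_congr rfl fun m _ => ?_
      simp only [c, Nat.mul_mod_right, if_true]
      ring
    have hB : ω * ∑ m ∈ Finset.range ((n + 1) / 2), c (2 * m + 1) * (-(ω ^ 2)) ^ m = z.im := by
      rw [← hy, smul_eq_mul, smul_eq_mul, mul_left_comm p, mul_left_comm q, ← mul_add, khBeta,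
        khBeta, Finset.mul_sum (a := p), Finset.mul_sum (a := q), ← Finset.sum_add_distrib]
      congr 1
      refine Finset.sum_congr rfl fun m _ => ?_
      have h : (2 * m + 1) % 2 ≠ 0 := by omega
      simp only [c, if_neg h]
      ring
    refine ⟨∑ k ∈ Finset.range (n + 1), Polynomial.C (c k) * Polynomial.X ^ k, ⟨?_, ?_⟩, ?_⟩
    · refine Polynomial.natDegree_sum_le_of_forall_le _ _ fun k hk => ?_
      exact (Polynomial.natDegree_C_mul_X_pow_le _ _).trans
        (Nat.lt_succ_iff.mp (Finset.mem_range.mp hk))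
    · intro k hk
      have hcoeff : (∑ k ∈ Finset.range (n + 1),
          Polynomial.C (c k) * Polynomial.X ^ k : Polynomial ℝ).coeff k = c k := by
        simp [Polynomial.finsetSum_coeff, Polynomial.coeff_C_mul, Polynomial.coeff_X_pow,
          hk]
      rw [hcoeff]
      exact hc k hk
    · beta_reduce
      rw [aeval_sum_C_mul_X_pow, sum_mul_I_pow, hA, hB, Complex.re_add_im]
  · intro i _ j _
    rw [khVertex, aeval_sum_C_mul_X_pow, sum_mul_I_pow]
    simp only [khCoeff_even l u i j, khCoeff_odd l u i j, khAlpha, khBeta]
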